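/- For every n ≥ 0, the multiset of eigenvalues of A_n², counted with algebraic multiplicity, equals the multiset of diagonal entries of A_n²; equivalently, the characteristic polynomial of A_n² equals ∏_{J ∈ P_n} (X − (A_n²)_{J,J}). The same holds with B_n in place of A_n. -/

import Mathlib

/-!
Put `C_n = A_n - B_n` and `S = A_n ^ 2`, `P = A_n C_n`, `Q = C_n A_n`. Since `C_{n+1}` has `A_n` as
its lower left block and zeros elsewhere, `C_n ^ 2 = 0`, hence `B_n ^ 2 = S - P - Q`, and the triple
obeys the linear recursion
`S' = [[2S, P], [Q, 2S - P - Q]]`, `P' = [[S, 0], [Q - S, 0]]`, `Q' = [[0, 0], [S, S]]`.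

The point is that `S`, `P`, `Q` are simultaneously triangularizable over `ℤ`, and that each joint
weight `(s, p, q)` has `p = 0` or `q = 0`. Indeed, if this holds for `(S, P, Q)`, then on the
two-dimensional piece attached to a weight `(s, p, q)` the triple `(S', P', Q')` acts by
`[[2s, p], [q, 2s - p - q]]`, `[[s, 0], [q - s, 0]]`, `[[0, 0], [s, s]]`. If `q = 0` these share the
eigenvector `(1, -1)` and the weights are `(2s - p, s, 0)`, `(2s, 0, s)`; if `p = 0` they share
`(0, 1)` and the weights are `(2s - q, 0, s)`, `(2s, s, 0)`. In both cases the pairs `(s, p + q)`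
follow the same recursion as the pairs of diagonal entries of `S` and `P + Q`, which gives the
claim for `S = A_n ^ 2` and for `S - P - Q = B_n ^ 2`.

Flags are avoided by encoding triangularizability through determinants with matrix coefficients
(`Splits`): `det (T ⊗ 1 + X ⊗ S + Y ⊗ P + Z ⊗ Q)` is the product over the weights of
`det (T + s X + p Y + q Z)`, for square matrices `T, X, Y, Z` of any common size. The matrices
`S', P', Q'` are absorbed by doubling the size of the coefficients (`Splits.step`).
-/

open Finset

/-- Restriction of a subset of `Fin (n+1)` to `Fin n` (forgetting the top element). -/
def resSet {n : ℕ} (I : Finset (Fin (n + 1))) : Finset (Fin n) :=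
  Finset.univ.filter (fun j : Fin n => Fin.castSucc j ∈ I)

mutual
  /-- The matrix `A_n`, rows/columns indexed by subsets of `{1,…,n}` (element `j`
  of `[n]` corresponds to `j-1 : Fin n`, i.e. anti-lexicographic/binary order). -/
  def Amat : (n : ℕ) → Matrix (Finset (Fin n)) (Finset (Fin n)) ℤ
    | 0 => Matrix.of fun _ _ => 1
    | n + 1 => Matrix.of fun I J =>
        if Fin.last n ∈ I then
          if Fin.last n ∈ J then - Bmat n (resSet I) (resSet J)
          else Amat n (resSet I) (resSet J)
        else Amat n (resSet I) (resSet J)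
  /-- The matrix `B_n`. -/
  def Bmat : (n : ℕ) → Matrix (Finset (Fin n)) (Finset (Fin n)) ℤ
    | 0 => Matrix.of fun _ _ => 1
    | n + 1 => Matrix.of fun I J =>
        if Fin.last n ∈ I then
          if Fin.last n ∈ J then - Bmat n (resSet I) (resSet J)
          else 0
        else Amat n (resSet I) (resSet J)
end

/-- The Walsh-Hadamard matrix `H_n`. -/
def Hmat : (n : ℕ) → Matrix (Finset (Fin n)) (Finset (Fin n)) ℤ
  | 0 => Matrix.of fun _ _ => 1
  | n + 1 => Matrix.of fun I J =>
      if Fin.last n ∈ I ∧ Fin.last n ∈ J then - Hmat n (resSet I) (resSet J)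
      else Hmat n (resSet I) (resSet J)

/-- The Möbius matrix `M_n` of the boolean lattice. -/
def Mobmat (n : ℕ) : Matrix (Finset (Fin n)) (Finset (Fin n)) ℤ :=
  Matrix.of fun I J => if I ⊆ J then (-1) ^ (J \ I).card else 0

/-- The zeta matrix `Z_n` of the boolean lattice. -/
def Zetamat (n : ℕ) : Matrix (Finset (Fin n)) (Finset (Fin n)) ℤ :=
  Matrix.of fun I J => if I ⊆ J then 1 else 0

/-- The subset of `[n] = {1,…,n}` corresponding to a subset of `Fin n`. -/
def natSet {n : ℕ} (I : Finset (Fin n)) : Finset ℕ := Finset.image (fun j : Fin n => (j : ℕ) + 1) I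

/-- The ordinal number of a subset in the anti-lexicographic order. -/
def ordFin {n : ℕ} (I : Finset (Fin n)) : ℕ := ∑ j ∈ I, 2 ^ (j : ℕ)

/-- The run (maximal interval of consecutive integers) of `I` containing `j`
(empty if `j ∉ I`). -/
def runOf (I : Finset ℕ) (j : ℕ) : Finset ℕ :=
  I.filter (fun i => ∀ k ∈ Finset.Icc (min i j) (max i j), k ∈ I)

/-- The set of runs (maximal intervals of consecutive integers) of `I`. -/
def runsOf (I : Finset ℕ) : Finset (Finset ℕ) := I.image (runOf I)

/-- `P` is a prefix of the interval `R`: it consists of an initial segment of `R`. -/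
def IsPrefixOf (P R : Finset ℕ) : Prop :=
  P ⊆ R ∧ ∀ i ∈ R, ∀ j ∈ P, i ≤ j → i ∈ P

/-! ### Determinants of pencils and the doubling step -/

/-- The pencil `T ⊗ 1 + X ⊗ S + Y ⊗ P + Z ⊗ Q`, with coefficient matrices over `R` and
integer matrices `S`, `P`, `Q`. -/
def pencil {R m ι : Type} [CommRing R] [DecidableEq ι] (T X Y Z : Matrix m m R)
    (S P Q : Matrix ι ι ℤ) : Matrix (m × ι) (m × ι) R :=
  Matrix.of fun a b => T a.1 b.1 * (if a.2 = b.2 then 1 else 0) + X a.1 b.1 * (S a.2 b.2 : R)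
    + Y a.1 b.1 * (P a.2 b.2 : R) + Z a.1 b.1 * (Q a.2 b.2 : R)

/-- The determinants of all pencils in `S`, `P`, `Q` split as if the three matrices were
simultaneously triangular with weights `(s, p, q)` indexed by `i`, where `s = S i i` and `(p, q)` is
`(k, 0)` if `σ i` is true and `(0, k)` otherwise, for `k = P i i + Q i i`. -/
def Splits (R : Type) [CommRing R] {ι : Type} [Fintype ι] [DecidableEq ι]
    (S P Q : Matrix ι ι ℤ) : Prop :=
  ∃ σ : ι → Bool, ∀ (m : Type) [Fintype m] [DecidableEq m] (T X Y Z : Matrix m m R),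
    (pencil T X Y Z S P Q).det =
      ∏ i, (T + (S i i : R) • X + ((P i i + Q i i : ℤ) : R) • (if σ i then Y else Z)).det

theorem Splits.reindex {R ι κ : Type} [CommRing R] [Fintype ι] [DecidableEq ι] [Fintype κ]
    [DecidableEq κ] (e : κ ≃ ι) {S P Q : Matrix ι ι ℤ}
    (h : Splits R (S.submatrix e e) (P.submatrix e e) (Q.submatrix e e)) : Splits R S P Q := by
  obtain ⟨σ, h⟩ := h
  refine ⟨fun i => σ (e.symm i), fun m _ _ T X Y Z => ?_⟩
  rw [← Equiv.prod_comp e]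
  have h1 := h m T X Y Z
  simp only [Matrix.submatrix_apply] at h1
  simp only [Equiv.symm_apply_apply]
  rw [← h1, ← Matrix.det_submatrix_equiv_self (Equiv.prodCongr (Equiv.refl m) e)]
  congr 1
  ext a b
  simp [pencil]

/-- The action on a weight with `q = 0`: conjugation by `[[1, 0], [1, 1]]` makes
the block matrix upper triangular, the first basis vector becoming `(1, -1)`. -/
theorem det_block_left {R m : Type} [CommRing R] [Fintype m] [DecidableEq m]
    (T X Y Z : Matrix m m R) (s k : R) :
    (Matrix.fromBlocks (T + (2 * s) • X + s • Y) (k • X) (-(s • Y) + s • Z)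
      (T + (2 * s - k) • X + s • Z)).det =
    (T + (2 * s) • X + s • Z).det * (T + (2 * s - k) • X + s • Y).det := by
  have hU : (Matrix.fromBlocks 1 0 1 1 : Matrix (m ⊕ m) (m ⊕ m) R).det = 1 := by
    simp
  have hV : (Matrix.fromBlocks 1 0 (-1) 1 : Matrix (m ⊕ m) (m ⊕ m) R).det = 1 := by
    simp
  rw [← one_mul (Matrix.det _), ← hU, ← Matrix.det_mul, ← mul_one (Matrix.det _), ← hV,
    ← Matrix.det_mul, Matrix.fromBlocks_multiply, Matrix.fromBlocks_multiply, mul_comm (Matrix.det _),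
    ← Matrix.det_fromBlocks_zero₂₁ _ (k • X)]
  congr 1
  rw [Matrix.fromBlocks_inj]
  refine ⟨?_, ?_, ?_, ?_⟩ <;> simp <;> module

/-- The action on a weight with `p = 0` is already lower triangular. -/
theorem det_block_right {R m : Type} [CommRing R] [Fintype m] [DecidableEq m]
    (T X Y Z W : Matrix m m R) (s k : R) :
    (Matrix.fromBlocks (T + (2 * s) • X + s • Y) 0 W (T + (2 * s - k) • X + s • Z)).det =
    (T + (2 * s) • X + s • Y).det * (T + (2 * s - k) • X + s • Z).det :=
  Matrix.det_fromBlocks_zero₁₂ _ _ _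

/-- A pencil in `S', P', Q'` with coefficients of size `m` is a pencil in `S, P, Q` with
coefficients of size `m ⊕ m`. -/
theorem pencil_fromBlocks {R m ι : Type} [CommRing R] [Fintype m] [DecidableEq m] [Fintype ι]
    [DecidableEq ι] (T X Y Z : Matrix m m R) (S P Q : Matrix ι ι ℤ) :
    (pencil T X Y Z (Matrix.fromBlocks (2 * S) P Q (2 * S - P - Q))
      (Matrix.fromBlocks S 0 (Q - S) 0) (Matrix.fromBlocks 0 0 S S)).det =
    (pencil (Matrix.fromBlocks T 0 0 T)
      (Matrix.fromBlocks ((2 : R) • X + Y) 0 (Z - Y) ((2 : R) • X + Z))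
      (Matrix.fromBlocks 0 X 0 (-X)) (Matrix.fromBlocks 0 0 (X + Y) (-X)) S P Q).det := by
  let e : (m ⊕ m) × ι ≃ m × (ι ⊕ ι) :=
    { toFun := fun x => Sum.elim (fun a => (a, Sum.inl x.2)) (fun a => (a, Sum.inr x.2)) x.1
      invFun := fun x => Sum.elim (fun i => (Sum.inl x.1, i)) (fun i => (Sum.inr x.1, i)) x.2
      left_inv := by rintro ⟨a | a, i⟩ <;> rfl
      right_inv := by rintro ⟨a, i | i⟩ <;> rfl }
  rw [← Matrix.det_submatrix_equiv_self e]
  congr 1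
  have h2 : ∀ i j, (2 * S : Matrix ι ι ℤ) i j = 2 * S i j := fun i j => by
    rw [two_mul, two_mul]; rfl
  ext ⟨a | a, i⟩ ⟨b | b, j⟩ <;> simp [pencil, e, h2] <;> ring

theorem Splits.step {R ι : Type} [CommRing R] [Fintype ι] [DecidableEq ι] {S P Q : Matrix ι ι ℤ}
    (h : Splits R S P Q) :
    Splits R (Matrix.fromBlocks (2 * S) P Q (2 * S - P - Q))
      (Matrix.fromBlocks S 0 (Q - S) 0) (Matrix.fromBlocks 0 0 S S) := by
  obtain ⟨σ, h⟩ := h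
  refine ⟨Sum.elim (fun i => !σ i) σ, fun m _ _ T X Y Z => ?_⟩
  rw [pencil_fromBlocks, h, Fintype.prod_sum_type, ← Finset.prod_mul_distrib]
  have h2 : ∀ i j, (2 * S : Matrix ι ι ℤ) i j = 2 * S i j := fun i j => by
    rw [two_mul, two_mul]; rfl
  refine Finset.prod_congr rfl fun i _ => ?_
  cases hσ : σ i
  · have := det_block_right T X Y Z
      ((S i i : R) • (Z - Y) + ((P i i + Q i i : ℤ) : R) • (X + Y)) (S i i : R)
      ((P i i + Q i i : ℤ) : R)
    simp only [Matrix.fromBlocks_apply₁₁, Matrix.fromBlocks_apply₂₂, Sum.elim_inl, Sum.elim_inr,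
      hσ, Matrix.sub_apply, h2, Matrix.zero_apply]
    convert this using 2
    · simp only [Bool.false_eq_true, if_false, Matrix.fromBlocks_smul, Matrix.fromBlocks_add]
      rw [Matrix.fromBlocks_inj]
      refine ⟨?_, ?_, ?_, ?_⟩ <;> push_cast <;> simp <;> module
    · congr 1
      simp
    · congr 1
      simp [sub_sub]
  · have := det_block_left T X Y Z (S i i : R) ((P i i + Q i i : ℤ) : R)
    simp only [Matrix.fromBlocks_apply₁₁, Matrix.fromBlocks_apply₂₂, Sum.elim_inl, Sum.elim_inr,
      hσ, Matrix.sub_apply, h2, Matrix.zero_apply]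
    convert this using 2
    · simp only [if_true, Matrix.fromBlocks_smul, Matrix.fromBlocks_add]
      rw [Matrix.fromBlocks_inj]
      refine ⟨?_, ?_, ?_, ?_⟩ <;> push_cast <;> simp <;> module
    · congr 1
      simp
    · congr 1
      simp [sub_sub]

/-! ### Block structure of `A_n` and `B_n` -/

/-- Subsets of `Fin (n + 1)`, split according to whether they contain the top element
(`Sum.inr`) or not (`Sum.inl`). -/
def splitTop (n : ℕ) : Finset (Fin n) ⊕ Finset (Fin n) ≃ Finset (Fin (n + 1)) where
  toFun := Sum.elim (fun I => I.map Fin.castSuccEmb)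
    (fun I => insert (Fin.last n) (I.map Fin.castSuccEmb))
  invFun J := if Fin.last n ∈ J then Sum.inr (resSet J) else Sum.inl (resSet J)
  left_inv := by
    rintro (I | I)
    · simp [resSet, Fin.castSucc_ne_last]
    · simp [resSet, Fin.castSucc_ne_last]
  right_inv := by
    intro J
    by_cases h : Fin.last n ∈ J
    · simp only [h, if_true, Sum.elim_inr]
      ext x
      induction x using Fin.lastCases <;> simp [resSet, h, Fin.castSucc_ne_last]
    · simp only [h, if_false, Sum.elim_inl]
      ext x
      induction x using Fin.lastCases <;> simp [resSet, h, Fin.castSucc_ne_last]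

theorem resSet_inl {n : ℕ} (I : Finset (Fin n)) : resSet (splitTop n (Sum.inl I)) = I := by
  simp [splitTop, resSet]

theorem resSet_inr {n : ℕ} (I : Finset (Fin n)) : resSet (splitTop n (Sum.inr I)) = I := by
  simp [splitTop, resSet, Fin.castSucc_ne_last]

theorem last_inl {n : ℕ} (I : Finset (Fin n)) : Fin.last n ∉ splitTop n (Sum.inl I) := by
  simp [splitTop, Fin.castSucc_ne_last]

theorem last_inr {n : ℕ} (I : Finset (Fin n)) : Fin.last n ∈ splitTop n (Sum.inr I) := by
  simp [splitTop]

theorem Amat_blocks (n : ℕ) : (Amat (n + 1)).submatrix (splitTop n) (splitTop n) =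
    Matrix.fromBlocks (Amat n) (Amat n) (Amat n) (-Bmat n) := by
  ext (I | I) (J | J) <;> simp [Amat, resSet_inl, resSet_inr, last_inl, last_inr]

theorem Bmat_blocks (n : ℕ) : (Bmat (n + 1)).submatrix (splitTop n) (splitTop n) =
    Matrix.fromBlocks (Amat n) (Amat n) 0 (-Bmat n) := by
  ext (I | I) (J | J) <;> simp [Bmat, resSet_inl, resSet_inr, last_inl, last_inr]

theorem Cmat_blocks (n : ℕ) :
    (Amat (n + 1) - Bmat (n + 1)).submatrix (splitTop n) (splitTop n) =
      Matrix.fromBlocks 0 0 (Amat n) 0 := by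
  rw [Matrix.submatrix_sub, Pi.sub_apply, Pi.sub_apply, Amat_blocks, Bmat_blocks,
    sub_eq_add_neg, Matrix.fromBlocks_neg, Matrix.fromBlocks_add]
  simp

theorem Cmat_sq (n : ℕ) : (Amat n - Bmat n) * (Amat n - Bmat n) = 0 := by
  cases n with
  | zero =>
    have : Amat 0 - Bmat 0 = 0 := by ext; simp [Amat, Bmat]
    simp [this]
  | succ n =>
    have h : ((Amat (n + 1) - Bmat (n + 1)) * (Amat (n + 1) - Bmat (n + 1))).submatrix
        (splitTop n) (splitTop n) = 0 := by
      rw [← Matrix.submatrix_mul_equiv _ _ _ (splitTop n), Cmat_blocks,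
        Matrix.fromBlocks_multiply]
      simp
    ext i j
    simpa using congrFun (congrFun h ((splitTop n).symm i)) ((splitTop n).symm j)

theorem Bmat_sq (n : ℕ) : Bmat n * Bmat n =
    Amat n * Amat n - Amat n * (Amat n - Bmat n) - (Amat n - Bmat n) * Amat n := by
  have h := Cmat_sq n
  rw [← sub_eq_zero, ← h]
  noncomm_ring

theorem splits_Amat (R : Type) [CommRing R] (n : ℕ) :
    Splits R (Amat n * Amat n) (Amat n * (Amat n - Bmat n)) ((Amat n - Bmat n) * Amat n) := by
  induction n with
  | zero =>
    have h : Amat 0 - Bmat 0 = 0 := by ext; simp [Amat, Bmat]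
    have h1 : ∀ i j, (Amat 0 * Amat 0) i j = 1 := by
      intro i j; simp [Matrix.mul_apply, Amat]
    rw [h]
    refine ⟨fun _ => true, fun m _ _ T X Y Z => ?_⟩
    rw [← Matrix.det_submatrix_equiv_self (Equiv.prodUnique m (Finset (Fin 0))).symm,
      Fintype.prod_unique]
    congr 1
    ext a b
    simp [pencil, h1]
  | succ n ih =>
    refine Splits.reindex (splitTop n) ?_
    simp only [← Matrix.submatrix_mul_equiv _ _ _ (splitTop n)]
    rw [Cmat_blocks, Amat_blocks]
    simp only [Matrix.fromBlocks_multiply]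
    convert ih.step using 1
    · rw [Matrix.fromBlocks_inj]
      refine ⟨?_, ?_, ?_, ?_⟩
      · noncomm_ring
      · noncomm_ring
      · noncomm_ring
      · rw [neg_mul_neg, Bmat_sq]
        noncomm_ring
    · rw [Matrix.fromBlocks_inj]
      refine ⟨?_, ?_, ?_, ?_⟩
      · simp
      · simp
      · noncomm_ring
      · simp
    · rw [Matrix.fromBlocks_inj]
      refine ⟨?_, ?_, ?_, ?_⟩ <;> simp

/-! ### Characteristic polynomials -/

/-- The charpoly of `S + c (P + Q)` is read off from the pencil with `1 × 1` coefficients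
`T = X`, `X = -1`, `Y = Z = -c`. -/
theorem Splits.charpoly {ι : Type} [Fintype ι] [DecidableEq ι] {S P Q : Matrix ι ι ℤ}
    (h : Splits (Polynomial ℤ) S P Q) (c : ℤ) :
    (S + c • (P + Q)).charpoly =
      ∏ i, (Polynomial.X - Polynomial.C ((S + c • (P + Q)) i i)) := by
  obtain ⟨σ, h⟩ := h
  have h1 := h Unit (Matrix.of fun _ _ => Polynomial.X) (-1)
    (Matrix.of fun _ _ => -(c : Polynomial ℤ)) (Matrix.of fun _ _ => -(c : Polynomial ℤ))
  rw [← Matrix.det_submatrix_equiv_self (Equiv.uniqueProd ι Unit).symm] at h1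
  rw [Matrix.charpoly]
  convert h1 using 2
  · ext1 i j
    simp [pencil, Matrix.charmatrix_apply, Matrix.diagonal_apply, -zsmul_eq_mul]
    split_ifs <;> ring
  · simp [-zsmul_eq_mul]
    ring

/-- The multiset of eigenvalues of `A_n²` (counted with algebraic
multiplicity) equals the multiset of its diagonal entries: the characteristic
polynomial of `A_n²` is `∏_{J ∈ P_n} (X − (A_n²)_{J,J})`; and likewise for `B_n²`. -/
theorem charpoly_squares (n : ℕ) :
    (Amat n * Amat n).charpoly =
      (∏ J : Finset (Fin n), (Polynomial.X - Polynomial.C ((Amat n * Amat n) J J))) ∧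
    (Bmat n * Bmat n).charpoly =
      (∏ J : Finset (Fin n), (Polynomial.X - Polynomial.C ((Bmat n * Bmat n) J J))) := by
  have h := splits_Amat (Polynomial ℤ) n
  constructor
  · simpa only [zero_smul, add_zero] using h.charpoly 0
  · have hB : Bmat n * Bmat n = Amat n * Amat n + (-1 : ℤ) •
        (Amat n * (Amat n - Bmat n) + (Amat n - Bmat n) * Amat n) := by
      rw [Bmat_sq]; module
    rw [hB]
    exact h.charpoly (-1)
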